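/- For every n ≥ 1 and every (k_1,…,k_n) ∈ ℤ^n, α(n;k_1,…,k_n) = Σ_{A ∈ 𝒯_n(k_1,…,k_n)} (−1)^{s(A)}, where 𝒯_n(k_1,…,k_n) is the set of triangular arrays with special entries and bottom row (k_1,…,k_n), and s(A) is the total number of special entries and inversions of A. -/

import Mathlib

/-- A triangular array of size `n`, encoded as a function `ℕ → ℕ → ℤ` whose
meaningful entries are `a i j` for `1 ≤ j ≤ i ≤ n` (row `i` has entries
`a i 1, …, a i i`), normalized to be `0` outside this region. -/
def IsTri (n : ℕ) (a : ℕ → ℕ → ℤ) : Prop :=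
  ∀ i j, ¬ (1 ≤ j ∧ j ≤ i ∧ i ≤ n) → a i j = 0

/-- A Monotone Triangle of size `n`: strict increase along rows and weak
increase along North-East and South-East diagonals. -/
def IsMT (n : ℕ) (a : ℕ → ℕ → ℤ) : Prop :=
  IsTri n a ∧
  (∀ i j, 1 ≤ j → j + 1 ≤ i → i ≤ n → a i j < a i (j + 1)) ∧
  (∀ i j, 1 ≤ j → j ≤ i → i + 1 ≤ n →
    a (i + 1) j ≤ a i j ∧ a i j ≤ a (i + 1) (j + 1))

/-- A Generalized Monotone Triangle (GMT) of size `n`. -/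
def IsGMT (n : ℕ) (a : ℕ → ℕ → ℤ) : Prop :=
  IsTri n a ∧
  -- (1) each entry is weakly bounded by its SW- and SE-neighbour
  (∀ i j, 1 ≤ j → j ≤ i → i + 1 ≤ n →
    min (a (i + 1) j) (a (i + 1) (j + 1)) ≤ a i j ∧
    a i j ≤ max (a (i + 1) j) (a (i + 1) (j + 1))) ∧
  -- (2) three weakly increasing consecutive entries force strict increase above
  (∀ i j, 1 ≤ j → j + 1 ≤ i → i + 1 ≤ n →
    a (i + 1) j ≤ a (i + 1) (j + 1) → a (i + 1) (j + 1) ≤ a (i + 1) (j + 2) →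
    a i j < a i (j + 1)) ∧
  -- (3) equality over a strict descent forces an equal neighbour
  (∀ i j, 1 ≤ j → j ≤ i → i + 1 ≤ n →
    (a i j = a (i + 1) j → a (i + 1) (j + 1) < a (i + 1) j →
      2 ≤ j ∧ a i (j - 1) = a i j) ∧
    (a (i + 1) (j + 1) < a (i + 1) j → a (i + 1) (j + 1) = a i j →
      j + 1 ≤ i ∧ a i (j + 1) = a i j))

/-- The bottom row of a triangular array of size `n` is `(k 0, …, k (n-1))`
(1-indexed in the array). -/
def BottomRow (n : ℕ) (a : ℕ → ℕ → ℤ) (k : Fin n → ℤ) : Prop :=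
  ∀ j : Fin n, a n (j.1 + 1) = k j

/-- The set of Monotone Triangles of size `n` with bottom row `k`. -/
def MTset (n : ℕ) (k : Fin n → ℤ) : Set (ℕ → ℕ → ℤ) :=
  {a | IsMT n a ∧ BottomRow n a k}

/-- The set `𝒢ₙ(k)` of Generalized Monotone Triangles of size `n` with bottom row `k`. -/
def GMTset (n : ℕ) (k : Fin n → ℤ) : Set (ℕ → ℕ → ℤ) :=
  {a | IsGMT n a ∧ BottomRow n a k}

/-- The positions `(i, j)` of newcomers of a triangular array:
`a (i+1) j > a i j > a (i+1) (j+1)`. -/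
def newcomersF (n : ℕ) (a : ℕ → ℕ → ℤ) : Finset (ℕ × ℕ) :=
  ((Finset.range (n + 1)) ×ˢ (Finset.range (n + 1))).filter (fun p =>
    1 ≤ p.2 ∧ p.2 ≤ p.1 ∧ p.1 + 1 ≤ n ∧
    a p.1 p.2 < a (p.1 + 1) p.2 ∧ a (p.1 + 1) (p.2 + 1) < a p.1 p.2)

/-- The positions `(i, j)` of sign-changing pairs `(a i j, a i (j+1))` of a
triangular array: two equal consecutive entries whose interlaced neighbour
below is also equal to them. -/
def scPairsF (n : ℕ) (a : ℕ → ℕ → ℤ) : Finset (ℕ × ℕ) :=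
  ((Finset.range (n + 1)) ×ˢ (Finset.range (n + 1))).filter (fun p =>
    1 ≤ p.2 ∧ p.2 + 1 ≤ p.1 ∧ p.1 + 1 ≤ n ∧
    a p.1 p.2 = a p.1 (p.2 + 1) ∧ a (p.1 + 1) (p.2 + 1) = a p.1 p.2)

/-- `sc(A)`: the total number of newcomers and sign-changing pairs of `A`. -/
def scT (n : ℕ) (a : ℕ → ℕ → ℤ) : ℕ :=
  (newcomersF n a).card + (scPairsF n a).card

/-- `IsAlpha N f` asserts that `f` is the polynomial function
`α(N; k₁, …, k_N)`: it is given by a polynomial with rational coefficients of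
degree at most `N - 1` in each variable, and its value at every strictly
increasing integer sequence equals the number of Monotone Triangles with that
bottom row. -/
def IsAlpha (N : ℕ) (f : (Fin N → ℤ) → ℚ) : Prop :=
  (∃ P : MvPolynomial (Fin N) ℚ, (∀ i : Fin N, P.degreeOf i ≤ N - 1) ∧
    ∀ k : Fin N → ℤ, f k = MvPolynomial.eval (fun i => (k i : ℚ)) P) ∧
  (∀ k : Fin N → ℤ, StrictMono k → f k = ((MTset N k).ncard : ℚ))

/-- Conditions on a triangular array `a` of size `n` together with a set `S` of
special entries (positions `(i,j)` with `1 < j < i ≤ n`, no two adjacent in the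
same row): special entries equal both their parents, and every entry that is
not a parent of a special entry lies weakly between its two lower neighbours if
they weakly increase, and strictly between them if they strictly decrease (in
which case it is an inversion). -/
def SpecOK (n : ℕ) (a : ℕ → ℕ → ℤ) (S : Finset (ℕ × ℕ)) : Prop :=
  (∀ p ∈ S, 1 < p.2 ∧ p.2 < p.1 ∧ p.1 ≤ n) ∧
  (∀ p ∈ S, ∀ q ∈ S, p.1 = q.1 → q.2 ≠ p.2 + 1) ∧
  (∀ p ∈ S, a (p.1 - 1) (p.2 - 1) = a p.1 p.2 ∧ a (p.1 - 1) p.2 = a p.1 p.2) ∧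
  (∀ i j, 1 ≤ j → j ≤ i → i + 1 ≤ n → (i + 1, j) ∉ S → (i + 1, j + 1) ∉ S →
    (a (i + 1) j ≤ a (i + 1) (j + 1) →
      a (i + 1) j ≤ a i j ∧ a i j ≤ a (i + 1) (j + 1)) ∧
    (a (i + 1) (j + 1) < a (i + 1) j →
      a (i + 1) (j + 1) < a i j ∧ a i j < a (i + 1) j))

/-- An element of `𝒯ₙ`: a triangular array together with an admissible set of
special entries. -/
def IsTArr (n : ℕ) (a : ℕ → ℕ → ℤ) (S : Finset (ℕ × ℕ)) : Prop :=
  IsTri n a ∧ SpecOK n a S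

/-- The positions of inversions of an element of `𝒯ₙ`: entries that are not
parents of special entries and whose two lower neighbours strictly decrease. -/
def invF (n : ℕ) (a : ℕ → ℕ → ℤ) (S : Finset (ℕ × ℕ)) : Finset (ℕ × ℕ) :=
  ((Finset.range (n + 1)) ×ˢ (Finset.range (n + 1))).filter (fun p =>
    1 ≤ p.2 ∧ p.2 ≤ p.1 ∧ p.1 + 1 ≤ n ∧
    (p.1 + 1, p.2) ∉ S ∧ (p.1 + 1, p.2 + 1) ∉ S ∧
    a (p.1 + 1) (p.2 + 1) < a (p.1 + 1) p.2)

/-- `s(A)`: the total number of special entries and inversions. -/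
def sT (n : ℕ) (a : ℕ → ℕ → ℤ) (S : Finset (ℕ × ℕ)) : ℕ :=
  S.card + (invF n a S).card

/-- The set `𝒯ₙ(k)` of triangular arrays with special entries and bottom row `k`. -/
def TSet (n : ℕ) (k : Fin n → ℤ) : Set ((ℕ → ℕ → ℤ) × Finset (ℕ × ℕ)) :=
  {A | IsTArr n A.1 A.2 ∧ BottomRow n A.1 k}

/-- The condition `a_{i,j-1} ≤ a_{i,j} ≤ a_{i,j+1} → a_{i-1,j-1} < a_{i-1,j}`. -/
def StrictCond (n : ℕ) (a : ℕ → ℕ → ℤ) : Prop :=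
  ∀ i j, 2 ≤ j → j + 1 ≤ i → i ≤ n →
    a i (j - 1) ≤ a i j → a i j ≤ a i (j + 1) → a (i - 1) (j - 1) < a (i - 1) j

/-! ### Rows and the transition between consecutive rows -/

/-- A row `k` of length `n`, read as a `1`-indexed sequence that is `0` outside `1, …, n`. -/
def padRow {n : ℕ} (k : Fin n → ℤ) (j : ℕ) : ℤ :=
  if h : 1 ≤ j ∧ j ≤ n then k ⟨j - 1, by omega⟩ else 0

theorem padRow_add_one {n : ℕ} (k : Fin n → ℤ) (j : Fin n) : padRow k (j + 1) = k j := by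
  have := j.2
  simp [padRow, show (j : ℕ) + 1 ≤ n by omega]

theorem padRow_of_not {n : ℕ} (k : Fin n → ℤ) {j : ℕ} (h : ¬ (1 ≤ j ∧ j ≤ n)) :
    padRow k j = 0 := by
  simp only [padRow, dif_neg h]

theorem IsTri.row_eq_padRow {n : ℕ} {a : ℕ → ℕ → ℤ} (h : IsTri n a) {k : Fin n → ℤ}
    (hk : BottomRow n a k) : a n = padRow k := by
  funext j
  by_cases hj : 1 ≤ j ∧ j ≤ n
  · have := hk ⟨j - 1, by omega⟩
    simp only [Nat.sub_add_cancel hj.1] at this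
    rw [this, padRow, dif_pos hj]
  · rw [h n j (by tauto), padRow_of_not k hj]

/-- The admissible sets of positions of special entries in row `n + 1`. -/
def specialSets (n : ℕ) : Finset (Finset ℕ) :=
  (Finset.Icc 2 n).powerset.filter fun s => ∀ j ∈ s, j + 1 ∉ s

/-- The values allowed for the `j`-th entry above the row `κ` with special positions `s`. -/
noncomputable def entryRange (s : Finset ℕ) (κ : ℕ → ℤ) (j : ℕ) : Finset ℤ :=
  if j ∈ s then {κ j} else if j + 1 ∈ s then {κ (j + 1)} else
    if κ j ≤ κ (j + 1) then Finset.Icc (κ j) (κ (j + 1)) else Finset.Ioo (κ (j + 1)) (κ j)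

/-- The `j`-th entry above the row `κ` with special positions `s` is an inversion. -/
def IsInvPos (s : Finset ℕ) (κ : ℕ → ℤ) (j : ℕ) : Prop :=
  j ∉ s ∧ j + 1 ∉ s ∧ κ (j + 1) < κ j

instance (s : Finset ℕ) (κ : ℕ → ℤ) : DecidablePred (IsInvPos s κ) := fun j => by
  unfold IsInvPos; infer_instance

/-- The sign contributed by the `j`-th entry above the row `κ`. -/
def entrySign (s : Finset ℕ) (κ : ℕ → ℤ) (j : ℕ) : ℚ :=
  if IsInvPos s κ j then -1 else 1

/-- The rows that may stand above the row `k` with special positions `s`. -/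
noncomputable def rowsAbove {n : ℕ} (k : Fin (n + 1) → ℤ) (s : Finset ℕ) : Finset (Fin n → ℤ) :=
  Fintype.piFinset fun j : Fin n => entryRange s (padRow k) (j + 1)

/-- The signed enumeration of `𝒯ₙ(k)`, defined row by row. -/
noncomputable def signedCount : (n : ℕ) → (Fin n → ℤ) → ℚ
  | 0, _ => 1
  | n + 1, k => ∑ s ∈ specialSets n, ∑ l ∈ rowsAbove k s,
      ((-1) ^ s.card * ∏ j : Fin n, entrySign s (padRow k) (j + 1)) * signedCount n l

/-! ### Adding and removing the bottom row -/

/-- Add the bottom row `k` to a triangular array of size `n`. -/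
def addRow {n : ℕ} (k : Fin (n + 1) → ℤ) (a : ℕ → ℕ → ℤ) (i j : ℕ) : ℤ :=
  if i = n + 1 then padRow k j else a i j

/-- Remove the rows below row `n`. -/
def dropRow (n : ℕ) (a : ℕ → ℕ → ℤ) (i j : ℕ) : ℤ :=
  if i ≤ n then a i j else 0

/-- Add the special positions `s` in row `n + 1`. -/
def addSpecial (n : ℕ) (s : Finset ℕ) (S : Finset (ℕ × ℕ)) : Finset (ℕ × ℕ) :=
  S ∪ s.image fun j => (n + 1, j)

/-- The special positions in row `n + 1`. -/
def rowSpecial (n : ℕ) (S : Finset (ℕ × ℕ)) : Finset ℕ :=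
  (S.filter fun p => p.1 = n + 1).image Prod.snd

theorem mem_rowSpecial {n j : ℕ} {S : Finset (ℕ × ℕ)} :
    j ∈ rowSpecial n S ↔ (n + 1, j) ∈ S := by
  simp only [rowSpecial, Finset.mem_image, Finset.mem_filter, Prod.exists]
  aesop

theorem mem_addSpecial {n i j : ℕ} {s : Finset ℕ} {S : Finset (ℕ × ℕ)} :
    (i, j) ∈ addSpecial n s S ↔ (i, j) ∈ S ∨ (i = n + 1 ∧ j ∈ s) := by
  simp only [addSpecial, Finset.mem_union, Finset.mem_image, Prod.mk.injEq]
  aesop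

theorem addRow_last {n : ℕ} (k : Fin (n + 1) → ℤ) (a : ℕ → ℕ → ℤ) (j : ℕ) :
    addRow k a (n + 1) j = padRow k j := by simp [addRow]

theorem addRow_of_le {n : ℕ} (k : Fin (n + 1) → ℤ) (a : ℕ → ℕ → ℤ) {i : ℕ} (h : i ≤ n)
    (j : ℕ) : addRow k a i j = a i j := by
  simp [addRow, show i ≠ n + 1 by omega]

theorem dropRow_of_le {n : ℕ} (a : ℕ → ℕ → ℤ) {i : ℕ} (h : i ≤ n)
    (j : ℕ) : dropRow n a i j = a i j := by
  simp [dropRow, h]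

theorem isTri_addRow {n : ℕ} (k : Fin (n + 1) → ℤ) {a : ℕ → ℕ → ℤ} (h : IsTri n a) :
    IsTri (n + 1) (addRow k a) := by
  intro i j hij
  unfold addRow
  split_ifs with hi
  · exact padRow_of_not k (by omega)
  · exact h i j (by omega)

theorem isTri_dropRow {n : ℕ} {a : ℕ → ℕ → ℤ} (h : IsTri (n + 1) a) :
    IsTri n (dropRow n a) := by
  intro i j hij
  unfold dropRow
  split_ifs with hi
  · exact h i j (by omega)
  · rfl

theorem bottomRow_addRow {n : ℕ} (k : Fin (n + 1) → ℤ) (a : ℕ → ℕ → ℤ) :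
    BottomRow (n + 1) (addRow k a) k := by
  intro j
  rw [addRow_last, padRow_add_one]

theorem dropRow_addRow {n : ℕ} (k : Fin (n + 1) → ℤ) {a : ℕ → ℕ → ℤ} (h : IsTri n a) :
    dropRow n (addRow k a) = a := by
  funext i j
  by_cases hi : i ≤ n
  · rw [dropRow_of_le _ hi, addRow_of_le _ _ hi]
  · rw [h i j (by omega), dropRow, if_neg hi]

theorem addRow_dropRow {n : ℕ} {k : Fin (n + 1) → ℤ} {a : ℕ → ℕ → ℤ} (h : IsTri (n + 1) a)
    (hk : BottomRow (n + 1) a k) : addRow k (dropRow n a) = a := by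
  funext i j
  unfold addRow
  split_ifs with hi
  · rw [hi, h.row_eq_padRow hk]
  · by_cases hi' : i ≤ n
    · rw [dropRow_of_le _ hi']
    · rw [h i j (by omega), dropRow, if_neg hi']

theorem mem_rowsAbove {n : ℕ} {k : Fin (n + 1) → ℤ} {s : Finset ℕ} {l : Fin n → ℤ} :
    l ∈ rowsAbove k s ↔
      ∀ j, 1 ≤ j → j ≤ n → padRow l j ∈ entryRange s (padRow k) j := by
  simp only [rowsAbove, Fintype.mem_piFinset]
  constructor
  · intro h j h1 h2
    have := h ⟨j - 1, by omega⟩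
    simp only [Nat.sub_add_cancel h1] at this
    rwa [padRow, dif_pos ⟨h1, h2⟩]
  · intro h j
    have := h (j + 1) (by omega) (by omega)
    rwa [padRow_add_one] at this

theorem mem_specialSets {n : ℕ} {s : Finset ℕ} :
    s ∈ specialSets n ↔ (∀ j ∈ s, 2 ≤ j ∧ j ≤ n) ∧ ∀ j ∈ s, j + 1 ∉ s := by
  simp [specialSets, Finset.subset_iff]

/-- The two parents of a special entry agree with it. -/
theorem parents_eq_of_mem_special {n : ℕ} {k : Fin (n + 1) → ℤ} {l : Fin n → ℤ}
    {s : Finset ℕ} (hs : s ∈ specialSets n) (hl : l ∈ rowsAbove k s) {j : ℕ} (hj : j ∈ s) :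
    padRow l (j - 1) = padRow k j ∧ padRow l j = padRow k j := by
  rw [mem_specialSets] at hs
  rw [mem_rowsAbove] at hl
  have hjn := hs.1 _ hj
  have hj' : j - 1 ∉ s := fun h => hs.2 _ h (by rwa [Nat.sub_add_cancel (by omega)])
  have hr := hl (j - 1) (by omega) (by omega)
  have hr' := hl j (by omega) (by omega)
  rw [entryRange, if_neg hj', Nat.sub_add_cancel (by omega), if_pos hj,
    Finset.mem_singleton] at hr
  rw [entryRange, if_pos hj, Finset.mem_singleton] at hr'
  exact ⟨hr, hr'⟩

/-- Membership in `𝒯ₙ₊₁(k)` of an array obtained by adding a row. -/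
theorem addRow_mem_TSet {n : ℕ} {k : Fin (n + 1) → ℤ} {l : Fin n → ℤ} {s : Finset ℕ}
    {a : ℕ → ℕ → ℤ} {S : Finset (ℕ × ℕ)} (hs : s ∈ specialSets n) (hl : l ∈ rowsAbove k s)
    (hA : (a, S) ∈ TSet n l) : (addRow k a, addSpecial n s S) ∈ TSet (n + 1) k := by
  obtain ⟨⟨htri, h1, h2, h3, h4⟩, hbot⟩ := hA
  have hparents := fun j => parents_eq_of_mem_special hs hl (j := j)
  rw [mem_specialSets] at hs
  rw [mem_rowsAbove] at hl
  rw [← htri.row_eq_padRow hbot] at hl hparents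
  dsimp only at *
  suffices h : SpecOK (n + 1) (addRow k a) (addSpecial n s S) from
    ⟨⟨isTri_addRow k htri, h⟩, bottomRow_addRow k a⟩
  refine ⟨?_, ?_, ?_, ?_⟩
  · rintro ⟨i, j⟩ hp
    rcases mem_addSpecial.1 hp with hp' | ⟨rfl, hp'⟩
    · have := h1 _ hp'
      dsimp only at *
      omega
    · have := hs.1 _ hp'
      dsimp only
      omega
  · rintro ⟨i, j⟩ hp ⟨i', j'⟩ hq hij hj
    dsimp only at hij hj
    subst hij hj
    rcases mem_addSpecial.1 hp with hp' | ⟨hi, hp'⟩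
    · rcases mem_addSpecial.1 hq with hq' | ⟨hi, hq'⟩
      · exact h2 _ hp' _ hq' rfl rfl
      · have := h1 _ hp'
        dsimp only at this
        omega
    · rcases mem_addSpecial.1 hq with hq' | ⟨-, hq'⟩
      · have := h1 _ hq'
        dsimp only at this
        omega
      · exact hs.2 _ hp' hq'
  · rintro ⟨i, j⟩ hp
    rcases mem_addSpecial.1 hp with hp' | ⟨hi, hp'⟩
    · have := h1 _ hp'
      have := h3 _ hp'
      dsimp only at *
      rwa [addRow_of_le _ _ (by omega), addRow_of_le _ _ (by omega), addRow_of_le _ _ (by omega)]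
    · subst hi
      dsimp only
      rw [addRow_last, Nat.add_sub_cancel, addRow_of_le _ _ le_rfl, addRow_of_le _ _ le_rfl]
      exact hparents j hp'
  · intro i j hj hji hi hp hq
    rw [mem_addSpecial] at hp hq
    push Not at hp hq
    rcases Nat.lt_or_ge i n with hin | hin
    · rw [addRow_of_le _ _ (by omega), addRow_of_le _ _ (by omega), addRow_of_le _ _ (by omega)]
      exact h4 i j hj hji hin hp.1 hq.1
    · obtain rfl : i = n := by omega
      have hr := hl j hj hji
      rw [entryRange, if_neg (hp.2 rfl), if_neg (hq.2 rfl)] at hr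
      rw [addRow_last, addRow_last, addRow_of_le _ _ le_rfl]
      split_ifs at hr with h
      · rw [Finset.mem_Icc] at hr
        exact ⟨fun _ => hr, fun h' => absurd h (not_le.2 h')⟩
      · rw [Finset.mem_Ioo] at hr
        exact ⟨fun h' => absurd h' h, fun _ => hr⟩

theorem rowSpecial_mem_specialSets {n : ℕ} {a : ℕ → ℕ → ℤ} {S : Finset (ℕ × ℕ)}
    (h : SpecOK (n + 1) a S) : rowSpecial n S ∈ specialSets n := by
  rw [mem_specialSets]
  refine ⟨fun j hj => ?_, fun j hj hj' => ?_⟩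
  · have := h.1 _ (mem_rowSpecial.1 hj)
    dsimp only at this
    omega
  · exact h.2.1 _ (mem_rowSpecial.1 hj) _ (mem_rowSpecial.1 hj') rfl rfl

theorem bottomRow_dropRow (n : ℕ) (a : ℕ → ℕ → ℤ) :
    BottomRow n (dropRow n a) fun j => a n (j + 1) := fun _ => dropRow_of_le _ le_rfl _

theorem dropRow_mem_TSet {n : ℕ} {a : ℕ → ℕ → ℤ} {S : Finset (ℕ × ℕ)}
    (h : IsTArr (n + 1) a S) :
    (dropRow n a, S.filter fun p => p.1 ≤ n) ∈ TSet n fun j => a n (j + 1) := by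
  obtain ⟨htri, h1, h2, h3, h4⟩ := h
  refine ⟨⟨isTri_dropRow htri, ?_, ?_, ?_, ?_⟩, bottomRow_dropRow n a⟩
  · intro p hp
    rw [Finset.mem_filter] at hp
    have := h1 p hp.1
    exact ⟨this.1, this.2.1, hp.2⟩
  · intro p hp q hq
    exact h2 p (Finset.mem_filter.1 hp).1 q (Finset.mem_filter.1 hq).1
  · intro p hp
    rw [Finset.mem_filter] at hp
    have := h3 p hp.1
    dsimp only
    rwa [dropRow_of_le _ (by omega), dropRow_of_le _ (by omega), dropRow_of_le _ (by omega)]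
  · intro i j hj hji hi hp hq
    rw [Finset.mem_filter, not_and'] at hp hq
    dsimp only
    rw [dropRow_of_le _ (by omega), dropRow_of_le _ (by omega), dropRow_of_le _ (by omega)]
    exact h4 i j hj hji (by omega) (hp hi) (hq hi)

theorem row_mem_rowsAbove {n : ℕ} {k : Fin (n + 1) → ℤ} {a : ℕ → ℕ → ℤ}
    {S : Finset (ℕ × ℕ)} (hA : (a, S) ∈ TSet (n + 1) k) :
    (fun j : Fin n => a n (j + 1)) ∈ rowsAbove k (rowSpecial n S) := by
  obtain ⟨⟨htri, h1, h2, h3, h4⟩, hbot⟩ := hA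
  rw [rowsAbove, Fintype.mem_piFinset, ← htri.row_eq_padRow hbot]
  intro j
  dsimp only at *
  have hj := j.2
  unfold entryRange
  simp only [mem_rowSpecial]
  split_ifs with hp hq hle
  · rw [Finset.mem_singleton]
    exact (h3 _ hp).2
  · rw [Finset.mem_singleton]
    exact (h3 _ hq).1
  · rw [Finset.mem_Icc]
    exact (h4 n (j + 1) (by omega) (by omega) le_rfl hp hq).1 hle
  · rw [Finset.mem_Ioo]
    exact (h4 n (j + 1) (by omega) (by omega) le_rfl hp hq).2 (not_le.1 hle)

theorem addSpecial_filter_rowSpecial {n : ℕ} {a : ℕ → ℕ → ℤ} {S : Finset (ℕ × ℕ)}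
    (h : SpecOK (n + 1) a S) :
    addSpecial n (rowSpecial n S) (S.filter fun p => p.1 ≤ n) = S := by
  ext ⟨i, j⟩
  rw [mem_addSpecial, mem_rowSpecial, Finset.mem_filter]
  constructor
  · rintro (⟨h, -⟩ | ⟨rfl, h⟩) <;> exact h
  · intro hp
    have := h.1 _ hp
    dsimp only at this ⊢
    rcases Nat.lt_or_ge n i with hi | hi
    · obtain rfl : i = n + 1 := by omega
      exact Or.inr ⟨rfl, hp⟩
    · exact Or.inl ⟨hp, hi⟩

theorem rowSpecial_addSpecial {n : ℕ} {a : ℕ → ℕ → ℤ} {S : Finset (ℕ × ℕ)}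
    (h : SpecOK n a S) (s : Finset ℕ) : rowSpecial n (addSpecial n s S) = s := by
  ext j
  rw [mem_rowSpecial, mem_addSpecial]
  refine ⟨?_, fun h => Or.inr ⟨rfl, h⟩⟩
  rintro (hp | ⟨-, hp⟩)
  · have := h.1 _ hp
    dsimp only at this
    omega
  · exact hp

theorem filter_addSpecial {n : ℕ} {a : ℕ → ℕ → ℤ} {S : Finset (ℕ × ℕ)}
    (h : SpecOK n a S) (s : Finset ℕ) :
    ((addSpecial n s S).filter fun p => p.1 ≤ n) = S := by
  ext ⟨i, j⟩
  rw [Finset.mem_filter, mem_addSpecial]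
  constructor
  · rintro ⟨hp | ⟨rfl, -⟩, hi⟩
    · exact hp
    · dsimp only at hi
      omega
  · intro hp
    exact ⟨Or.inl hp, (h.1 _ hp).2.2⟩

theorem card_addSpecial {n : ℕ} {a : ℕ → ℕ → ℤ} {S : Finset (ℕ × ℕ)}
    (h : SpecOK n a S) (s : Finset ℕ) : (addSpecial n s S).card = S.card + s.card := by
  rw [addSpecial, Finset.card_union_of_disjoint, Finset.card_image_of_injective]
  · intro x y hxy
    simpa using hxy
  · rw [Finset.disjoint_left]
    rintro ⟨i, j⟩ hp hq
    obtain ⟨x, -, hx⟩ := Finset.mem_image.1 hq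
    have := h.1 _ hp
    simp only [Prod.mk.injEq] at hx
    dsimp only at this
    omega

theorem card_invF_addRow {n : ℕ} (k : Fin (n + 1) → ℤ) {a : ℕ → ℕ → ℤ} {S : Finset (ℕ × ℕ)}
    (h : SpecOK n a S) (s : Finset ℕ) :
    (invF (n + 1) (addRow k a) (addSpecial n s S)).card =
      (invF n a S).card +
        (Finset.univ.filter fun j : Fin n => IsInvPos s (padRow k) (j + 1)).card := by
  have hS : ∀ j, (n + 1, j) ∉ S := fun j hp => by
    have := h.1 _ hp
    dsimp only at this
    omega
  have key : invF (n + 1) (addRow k a) (addSpecial n s S) = invF n a S ∪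
      (Finset.univ.filter fun j : Fin n => IsInvPos s (padRow k) (j + 1)).image
        fun j : Fin n => (n, (j : ℕ) + 1) := by
    ext ⟨i, j⟩
    simp only [invF, Finset.mem_filter, Finset.mem_product, Finset.mem_range, Finset.mem_union,
      Finset.mem_image, Finset.mem_univ, true_and, Prod.mk.injEq, mem_addSpecial]
    rcases Nat.lt_or_ge i n with hin | hin
    · rw [addRow_of_le _ _ (by omega), addRow_of_le _ _ (by omega)]
      constructor
      · rintro ⟨-, h1, h2, h3, h4, h5, h6⟩
        push Not at h4 h5
        exact Or.inl ⟨by omega, h1, h2, by omega, h4.1, h5.1, h6⟩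
      · rintro (⟨-, h1, h2, h3, h4, h5, h6⟩ | ⟨x, -, hx, -⟩)
        · refine ⟨by omega, h1, h2, by omega, ?_, ?_, h6⟩
          · rintro (h | ⟨h, -⟩)
            · exact h4 h
            · omega
          · rintro (h | ⟨h, -⟩)
            · exact h5 h
            · omega
        · omega
    · constructor
      · rintro ⟨-, h1, h2, h3, h4, h5, h6⟩
        obtain rfl : i = n := by omega
        rw [addRow_last, addRow_last] at h6
        push Not at h4 h5
        refine Or.inr ⟨⟨j - 1, by omega⟩, ?_, rfl, Nat.sub_add_cancel h1⟩
        simp only [Nat.sub_add_cancel h1]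
        exact ⟨h4.2 rfl, h5.2 rfl, h6⟩
      · rintro (⟨-, h1, h2, h3, h4, h5, h6⟩ | ⟨x, ⟨hx1, hx2, hx3⟩, rfl, rfl⟩)
        · omega
        · have := x.2
          rw [addRow_last, addRow_last]
          refine ⟨by omega, by omega, by omega, by omega, ?_, ?_, hx3⟩
          · rintro (h | ⟨-, h⟩)
            · exact hS _ h
            · exact hx1 h
          · rintro (h | ⟨-, h⟩)
            · exact hS _ h
            · exact hx2 h
  rw [key, Finset.card_union_of_disjoint, Finset.card_image_of_injective]
  · intro x y hxy
    simpa [Fin.ext_iff] using hxy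
  · rw [Finset.disjoint_left]
    rintro ⟨i, j⟩ hp hq
    obtain ⟨x, -, hx⟩ := Finset.mem_image.1 hq
    simp only [invF, Finset.mem_filter] at hp
    simp only [Prod.mk.injEq] at hx
    omega

theorem sign_addRow {n : ℕ} (k : Fin (n + 1) → ℤ) {a : ℕ → ℕ → ℤ} {S : Finset (ℕ × ℕ)}
    (h : SpecOK n a S) (s : Finset ℕ) :
    (-1 : ℚ) ^ sT (n + 1) (addRow k a) (addSpecial n s S) =
      ((-1) ^ s.card * ∏ j : Fin n, entrySign s (padRow k) (j + 1)) * (-1) ^ sT n a S := by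
  have : ∏ j : Fin n, entrySign s (padRow k) (j + 1) =
      (-1) ^ (Finset.univ.filter fun j : Fin n => IsInvPos s (padRow k) (j + 1)).card := by
    simp only [entrySign, Finset.prod_ite, Finset.prod_const, one_pow, mul_one]
  rw [this, sT, sT, card_addSpecial h, card_invF_addRow k h]
  ring

open Classical in
theorem exists_finset_TSet (n : ℕ) (k : Fin n → ℤ) :
    ∃ F : Finset ((ℕ → ℕ → ℤ) × Finset (ℕ × ℕ)), (∀ A, A ∈ F ↔ A ∈ TSet n k) ∧
      ∑ A ∈ F, (-1 : ℚ) ^ sT n A.1 A.2 = signedCount n k := by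
  induction n with
  | zero =>
    refine ⟨{(fun _ _ => 0, ∅)}, ?_, by simp [sT, invF, signedCount]⟩
    rintro ⟨a, S⟩
    rw [Finset.mem_singleton]
    constructor
    · rintro ⟨⟩
      exact ⟨⟨fun _ _ _ => rfl, by simp [SpecOK]⟩, fun j => j.elim0⟩
    · rintro ⟨⟨htri, h1, -⟩, -⟩
      refine Prod.ext (funext fun i => funext fun j => htri i j (by omega)) ?_
      refine Finset.eq_empty_of_forall_notMem fun p hp => ?_
      have := h1 p hp
      omega
  | succ n ih =>
    choose F hF hsum using ih
    let index : Finset (Σ _ : Finset ℕ, Σ _ : Fin n → ℤ, (ℕ → ℕ → ℤ) × Finset (ℕ × ℕ)) :=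
      (specialSets n).sigma fun s => (rowsAbove k s).sigma F
    let g : (Σ _ : Finset ℕ, Σ _ : Fin n → ℤ, (ℕ → ℕ → ℤ) × Finset (ℕ × ℕ)) →
        (ℕ → ℕ → ℤ) × Finset (ℕ × ℕ) :=
      fun x => (addRow k x.2.2.1, addSpecial n x.1 x.2.2.2)
    have hmem : ∀ s l A, (⟨s, l, A⟩ : Σ _ : Finset ℕ, Σ _ : Fin n → ℤ,
        (ℕ → ℕ → ℤ) × Finset (ℕ × ℕ)) ∈ index ↔
        s ∈ specialSets n ∧ l ∈ rowsAbove k s ∧ A ∈ TSet n l := by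
      intro s l A
      simp only [index, Finset.mem_sigma, hF]
    refine ⟨index.image g, ?_, ?_⟩
    · rintro ⟨a, S⟩
      rw [Finset.mem_image]
      constructor
      · rintro ⟨⟨s, l, A⟩, hx, hg⟩
        obtain ⟨hs, hl, hA⟩ := (hmem s l A).1 hx
        rw [← hg]
        exact addRow_mem_TSet hs hl hA
      · intro hA
        refine ⟨⟨rowSpecial n S, fun j => a n (j + 1), dropRow n a, S.filter fun p => p.1 ≤ n⟩,
          (hmem _ _ _).2 ⟨rowSpecial_mem_specialSets hA.1.2, row_mem_rowsAbove hA,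
            dropRow_mem_TSet hA.1⟩, ?_⟩
        exact Prod.ext (addRow_dropRow hA.1.1 hA.2) (addSpecial_filter_rowSpecial hA.1.2)
    · rw [Finset.sum_image]
      · simp only [index, Finset.sum_sigma, signedCount, g]
        refine Finset.sum_congr rfl fun s _ => Finset.sum_congr rfl fun l _ => ?_
        rw [← hsum, Finset.mul_sum]
        refine Finset.sum_congr rfl fun A hA => ?_
        exact sign_addRow k ((hF l A).1 hA).1.2 s
      · rintro ⟨s, l, a, S⟩ hx ⟨s', l', a', S'⟩ hx' hg
        obtain ⟨hs, hl, hA⟩ := (hmem _ _ _).1 hx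
        obtain ⟨hs', hl', hA'⟩ := (hmem _ _ _).1 hx'
        simp only [g, Prod.mk.injEq] at hg
        have ha : a = a' := by
          have h1 := dropRow_addRow k hA.1.1
          have h2 := dropRow_addRow k hA'.1.1
          dsimp only at h1 h2
          rw [← h1, ← h2, hg.1]
        have hss : s = s' := by
          rw [← rowSpecial_addSpecial hA.1.2 s, ← rowSpecial_addSpecial hA'.1.2 s', hg.2]
        have hSS : S = S' := by
          have h1 := filter_addSpecial hA.1.2 s
          have h2 := filter_addSpecial hA'.1.2 s'
          dsimp only at h1 h2
          rw [← h1, ← h2, hg.2]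
        have hll : l = l' := by
          funext j
          rw [← hA.2 j, ← hA'.2 j]
          exact congrFun (congrFun ha _) _
        subst ha hss hSS hll
        rfl

theorem finsum_TSet_eq_signedCount (n : ℕ) (k : Fin n → ℤ) :
    ∑ᶠ A ∈ TSet n k, (-1 : ℚ) ^ sT n A.1 A.2 = signedCount n k := by
  obtain ⟨F, hF, hsum⟩ := exists_finset_TSet n k
  rw [← hsum, ← finsum_mem_coe_finset]
  refine finsum_mem_congr (Set.ext fun A => ?_) fun _ _ => rfl
  rw [Finset.mem_coe, hF]

/-! ### Polynomiality -/

/-- A function on integer rows given by a polynomial with rational coefficients. -/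
def IsPolyFun {n : ℕ} (f : (Fin n → ℤ) → ℚ) : Prop :=
  ∃ P : MvPolynomial (Fin n) ℚ, ∀ k, f k = MvPolynomial.eval (fun i => (k i : ℚ)) P

namespace IsPolyFun

variable {n : ℕ}

theorem const (c : ℚ) : IsPolyFun fun _ : Fin n → ℤ => c :=
  ⟨MvPolynomial.C c, by simp⟩

theorem coord (i : Fin n) : IsPolyFun fun k : Fin n → ℤ => (k i : ℚ) :=
  ⟨MvPolynomial.X i, by simp⟩

theorem mul {f g : (Fin n → ℤ) → ℚ} (hf : IsPolyFun f) (hg : IsPolyFun g) :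
    IsPolyFun fun k => f k * g k := by
  obtain ⟨P, hP⟩ := hf
  obtain ⟨Q, hQ⟩ := hg
  exact ⟨P * Q, fun k => by simp only [hP, hQ, map_mul]⟩

theorem sub {f g : (Fin n → ℤ) → ℚ} (hf : IsPolyFun f) (hg : IsPolyFun g) :
    IsPolyFun fun k => f k - g k := by
  obtain ⟨P, hP⟩ := hf
  obtain ⟨Q, hQ⟩ := hg
  exact ⟨P - Q, fun k => by simp only [hP, hQ, map_sub]⟩

theorem sum {ι : Type*} (s : Finset ι) {f : ι → (Fin n → ℤ) → ℚ}
    (hf : ∀ i ∈ s, IsPolyFun (f i)) : IsPolyFun fun k => ∑ i ∈ s, f i k := by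
  choose! P hP using hf
  refine ⟨∑ i ∈ s, P i, fun k => ?_⟩
  rw [map_sum]
  exact Finset.sum_congr rfl fun i hi => hP i hi k

theorem prod {ι : Type*} (s : Finset ι) {f : ι → (Fin n → ℤ) → ℚ}
    (hf : ∀ i ∈ s, IsPolyFun (f i)) : IsPolyFun fun k => ∏ i ∈ s, f i k := by
  choose! P hP using hf
  refine ⟨∏ i ∈ s, P i, fun k => ?_⟩
  rw [map_prod]
  exact Finset.prod_congr rfl fun i hi => hP i hi k

theorem polynomial_comp {f : (Fin n → ℤ) → ℚ} (hf : IsPolyFun f) (Q : Polynomial ℚ) :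
    IsPolyFun fun k => Q.eval (f k) := by
  obtain ⟨P, hP⟩ := hf
  refine ⟨Polynomial.aeval P Q, fun k => ?_⟩
  dsimp only
  rw [hP, ← Polynomial.coe_aeval_eq_eval, Polynomial.aeval_def, Polynomial.aeval_def,
    Polynomial.hom_eval₂]
  congr 1
  ext
  simp

theorem pow {f : (Fin n → ℤ) → ℚ} (hf : IsPolyFun f) (m : ℕ) :
    IsPolyFun fun k => f k ^ m := by
  simpa using hf.polynomial_comp (Polynomial.X ^ m)

/-- A polynomial function vanishing on all strictly increasing rows vanishes. -/
theorem eq_zero_of_strictMono {f : (Fin n → ℤ) → ℚ} (hf : IsPolyFun f)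
    (h : ∀ k, StrictMono k → f k = 0) (k : Fin n → ℤ) : f k = 0 := by
  obtain ⟨P, hP⟩ := hf
  let line : Fin n → Polynomial ℚ := fun i =>
    Polynomial.C (k i : ℚ) + Polynomial.C ((i : ℕ) : ℚ) * Polynomial.X
  have hline : ∀ t : ℤ, (MvPolynomial.aeval line P).eval (t : ℚ) = f fun i => k i + (i : ℕ) * t := by
    intro t
    rw [hP, ← Polynomial.coe_evalRingHom, MvPolynomial.map_aeval, MvPolynomial.eval]
    congr 2
    · ext
      simp
    · funext i
      simp [line]
  have hzero : MvPolynomial.aeval line P = 0 := by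
    refine Polynomial.eq_zero_of_infinite_isRoot _ (Set.Infinite.mono
      (s := (fun t : ℤ => (t : ℚ)) '' {t : ℤ | ∀ i j, k i - k j < t}) ?_ ?_)
    · rintro _ ⟨t, ht, rfl⟩
      rw [Set.mem_ofPred_eq, Polynomial.IsRoot, hline]
      refine h _ fun i j hij => ?_
      have h1 := ht i j
      have h2 : ((i : ℕ) : ℤ) + 1 ≤ (j : ℕ) := by exact_mod_cast hij
      have h3 := ht i i
      nlinarith
    · refine Set.Infinite.image (fun x _ y _ hxy => by exact_mod_cast hxy) ?_
      obtain ⟨M, hM⟩ := Filter.eventually_atTop.1 (Filter.eventually_all.2 fun i =>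
        Filter.eventually_all.2 fun j => Filter.eventually_gt_atTop (k i - k j))
      exact (Set.Ici_infinite M).mono hM
  have := hline 0
  rw [hzero] at this
  simpa using this.symm

end IsPolyFun

theorem exists_polynomial_sub_eq_pow (m : ℕ) :
    ∃ Q : Polynomial ℚ, ∀ x : ℚ, Q.eval (x + 1) - Q.eval x = x ^ m := by
  refine ⟨Polynomial.C ((m + 1 : ℚ)⁻¹) * Polynomial.bernoulli (m + 1), fun x => ?_⟩
  have hm : (m + 1 : ℚ) ≠ 0 := by positivity
  rw [Polynomial.eval_mul, Polynomial.eval_mul, add_comm x 1, Polynomial.bernoulli_eval_one_add]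
  simp only [Polynomial.eval_C, Nat.add_sub_cancel]
  push_cast
  field_simp
  ring

theorem sum_Ico_eq_sub {G g : ℤ → ℚ} (h : ∀ x, G (x + 1) - G x = g x) {a b : ℤ} (hab : a ≤ b) :
    ∑ x ∈ Finset.Ico a b, g x = G b - G a := by
  induction b, hab using Int.leInduction with
  | base => simp
  | succ b hab ih =>
    have : Finset.Ico a (b + 1) = insert b (Finset.Ico a b) := by
      ext x
      simp only [Finset.mem_Ico, Finset.mem_insert]
      omega
    rw [this, Finset.sum_insert (by simp), ih, ← h]
    ring

theorem padRow_castSucc {n : ℕ} (k : Fin (n + 1) → ℤ) (j : Fin n) :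
    padRow k (j + 1) = k j.castSucc :=
  padRow_add_one k j.castSucc

theorem padRow_succ {n : ℕ} (k : Fin (n + 1) → ℤ) (j : Fin n) :
    padRow k (j + 1 + 1) = k j.succ :=
  padRow_add_one k j.succ

theorem isPolyFun_entry_sum {n : ℕ} (s : Finset ℕ) (j : Fin n) (m : ℕ) :
    IsPolyFun fun k : Fin (n + 1) → ℤ => entrySign s (padRow k) (j + 1) *
      ∑ x ∈ entryRange s (padRow k) (j + 1), (x : ℚ) ^ m := by
  unfold entrySign entryRange IsInvPos
  simp only [padRow_castSucc, padRow_succ]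
  by_cases hp : (j : ℕ) + 1 ∈ s
  · simpa [hp] using (IsPolyFun.coord j.castSucc).pow m
  by_cases hq : (j : ℕ) + 1 + 1 ∈ s
  · simpa [hp, hq] using (IsPolyFun.coord j.succ).pow m
  obtain ⟨Q, hQ⟩ := exists_polynomial_sub_eq_pow m
  have hQ' : ∀ x : ℤ, Q.eval ((x + 1 : ℤ) : ℚ) - Q.eval (x : ℚ) = (x : ℚ) ^ m := fun x => by
    rw [← hQ]
    push_cast
    rfl
  have hpoly := ((IsPolyFun.coord j.succ).polynomial_comp (Q.comp (Polynomial.X + 1))).sub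
    ((IsPolyFun.coord j.castSucc).polynomial_comp Q)
  convert hpoly using 2 with k
  simp only [hp, hq, not_false_eq_true, true_and, if_false, Polynomial.eval_comp,
    Polynomial.eval_add, Polynomial.eval_X, Polynomial.eval_one]
  rcases le_or_gt (k j.castSucc) (k j.succ) with h | h
  · have hIco : Finset.Icc (k j.castSucc) (k j.succ) =
        Finset.Ico (k j.castSucc) (k j.succ + 1) := by
      ext x
      simp only [Finset.mem_Icc, Finset.mem_Ico]
      omega
    rw [if_neg (not_lt.2 h), if_pos h, hIco,
      sum_Ico_eq_sub (G := fun x => Q.eval (x : ℚ)) hQ' (by omega)]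
    push_cast
    ring
  · have hIco : Finset.Ioo (k j.succ) (k j.castSucc) =
        Finset.Ico (k j.succ + 1) (k j.castSucc) := by
      ext x
      simp only [Finset.mem_Ioo, Finset.mem_Ico]
      omega
    rw [if_pos h, if_neg (not_le.2 h), hIco,
      sum_Ico_eq_sub (G := fun x => Q.eval (x : ℚ)) hQ' (by omega)]
    push_cast
    ring

theorem isPolyFun_signedCount (n : ℕ) : IsPolyFun (signedCount n) := by
  induction n with
  | zero => exact IsPolyFun.const 1
  | succ n ih =>
    obtain ⟨P, hP⟩ := ih
    have key : ∀ (k : Fin (n + 1) → ℤ) (s : Finset ℕ), ∑ l ∈ rowsAbove k s,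
        ((-1) ^ s.card * ∏ j : Fin n, entrySign s (padRow k) (j + 1)) * signedCount n l =
        ∑ m ∈ P.support, ((-1) ^ s.card * P.coeff m) * ∏ j : Fin n,
          (entrySign s (padRow k) (j + 1) *
            ∑ x ∈ entryRange s (padRow k) (j + 1), (x : ℚ) ^ m j) := by
      intro k s
      simp only [hP, MvPolynomial.eval_eq', Finset.prod_mul_distrib, Finset.prod_univ_sum,
        Finset.mul_sum]
      rw [Finset.sum_comm]
      exact Finset.sum_congr rfl fun m _ => Finset.sum_congr rfl fun l _ => by ring
    have hpoly : IsPolyFun fun k : Fin (n + 1) → ℤ => ∑ s ∈ specialSets n,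
        ∑ m ∈ P.support, ((-1) ^ s.card * P.coeff m) * ∏ j : Fin n,
          (entrySign s (padRow k) (j + 1) *
            ∑ x ∈ entryRange s (padRow k) (j + 1), (x : ℚ) ^ m j) :=
      IsPolyFun.sum _ fun s _ => IsPolyFun.sum _ fun m _ =>
        (IsPolyFun.const _).mul (IsPolyFun.prod _ fun j _ => isPolyFun_entry_sum s j (m j))
    simp only [← key] at hpoly
    exact hpoly

/-! ### Strictly increasing bottom rows -/

theorem strictMono_iff_padRow {n : ℕ} {l : Fin n → ℤ} :
    StrictMono l ↔ ∀ j, 1 ≤ j → j + 1 ≤ n → padRow l j < padRow l (j + 1) := by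
  constructor
  · intro h j h1 h2
    rw [padRow, dif_pos (by omega), padRow, dif_pos (by omega)]
    exact h (Fin.mk_lt_mk.2 (by omega))
  · intro h
    cases n with
    | zero => exact fun i => i.elim0
    | succ n =>
      rw [Fin.strictMono_iff_lt_succ]
      intro j
      have := h (j + 1) (by omega) (by omega)
      rwa [padRow_castSucc, padRow_succ] at this

theorem mem_rowsAbove_empty {n : ℕ} {k : Fin (n + 1) → ℤ} (hk : StrictMono k)
    {l : Fin n → ℤ} : l ∈ rowsAbove k ∅ ↔
      ∀ j, 1 ≤ j → j ≤ n → padRow k j ≤ padRow l j ∧ padRow l j ≤ padRow k (j + 1) := by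
  rw [strictMono_iff_padRow] at hk
  rw [mem_rowsAbove]
  refine forall_congr' fun j => forall_congr' fun h1 => forall_congr' fun h2 => ?_
  simp [entryRange, (hk j h1 (by omega)).le]

/-- The positions of entries of `k` that agree with both entries of `l` above them. -/
def doublePositions {n : ℕ} (k : Fin (n + 1) → ℤ) (l : Fin n → ℤ) : Finset ℕ :=
  (Finset.Icc 2 n).filter fun j => padRow l (j - 1) = padRow k j ∧ padRow l j = padRow k j

theorem mem_specialSets_and_mem_rowsAbove_iff {n : ℕ} {k : Fin (n + 1) → ℤ}
    (hk : StrictMono k) (s : Finset ℕ) (l : Fin n → ℤ) :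
    s ∈ specialSets n ∧ l ∈ rowsAbove k s ↔
      s ∈ (doublePositions k l).powerset ∧ l ∈ rowsAbove k ∅ := by
  have hk' := strictMono_iff_padRow.1 hk
  rw [mem_rowsAbove_empty hk, Finset.mem_powerset]
  constructor
  · rintro ⟨hs, hl⟩
    have hparents := fun j => parents_eq_of_mem_special hs hl (j := j)
    rw [mem_specialSets] at hs
    refine ⟨fun j hj => ?_, fun j h1 h2 => ?_⟩
    · exact Finset.mem_filter.2 ⟨Finset.mem_Icc.2 (hs.1 j hj), hparents j hj⟩
    · have hr := mem_rowsAbove.1 hl j h1 h2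
      have hlt := hk' j h1 (by omega)
      unfold entryRange at hr
      split_ifs at hr
      · rw [Finset.mem_singleton] at hr
        omega
      · rw [Finset.mem_singleton] at hr
        omega
      · exact Finset.mem_Icc.1 hr
      · omega
  · rintro ⟨hs, hl⟩
    have hs' : ∀ j ∈ s, (2 ≤ j ∧ j ≤ n) ∧
        padRow l (j - 1) = padRow k j ∧ padRow l j = padRow k j := fun j hj => by
      simpa [doublePositions] using hs hj
    refine ⟨mem_specialSets.2 ⟨fun j hj => (hs' j hj).1, fun j hj hj' => ?_⟩,
      mem_rowsAbove.2 fun j h1 h2 => ?_⟩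
    · have h1 := hs' j hj
      have h2 := hs' _ hj'
      have h3 := hk' j (by omega) (by omega)
      rw [Nat.add_sub_cancel] at h2
      omega
    · unfold entryRange
      split_ifs with hp hq hle
      · exact Finset.mem_singleton.2 (hs' _ hp).2.2
      · exact Finset.mem_singleton.2 (hs' _ hq).2.1
      · exact Finset.mem_Icc.2 (hl j h1 h2)
      · exact absurd (hk' j h1 (by omega)).le hle

theorem doublePositions_eq_empty_iff {n : ℕ} {k : Fin (n + 1) → ℤ} (hk : StrictMono k)
    {l : Fin n → ℤ} (hl : l ∈ rowsAbove k ∅) :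
    doublePositions k l = ∅ ↔ StrictMono l := by
  rw [mem_rowsAbove_empty hk] at hl
  rw [strictMono_iff_padRow, doublePositions, Finset.filter_eq_empty_iff]
  constructor
  · intro h j h1 h2
    have h3 := hl j h1 (by omega)
    have h4 := hl (j + 1) (by omega) (by omega)
    have h5 := @h (j + 1) (Finset.mem_Icc.2 (by omega))
    rw [Nat.add_sub_cancel] at h5
    omega
  · intro h j hj hd
    rw [Finset.mem_Icc] at hj
    have := h (j - 1) (by omega) (by omega)
    rw [Nat.sub_add_cancel (by omega)] at this
    omega

theorem signedCount_succ_of_strictMono {n : ℕ} {k : Fin (n + 1) → ℤ} (hk : StrictMono k) :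
    signedCount (n + 1) k = ∑ l ∈ (rowsAbove k ∅).filter StrictMono, signedCount n l := by
  have hsign : ∀ (s : Finset ℕ) (j : Fin n), entrySign s (padRow k) (j + 1) = 1 := by
    intro s j
    refine if_neg fun h => absurd h.2.2 (not_lt.2 ?_)
    exact (strictMono_iff_padRow.1 hk (j + 1) (by omega) (by omega)).le
  simp only [signedCount, hsign, Finset.prod_const_one, mul_one]
  rw [Finset.sum_comm' (mem_specialSets_and_mem_rowsAbove_iff hk), Finset.sum_filter]
  refine Finset.sum_congr rfl fun l hl => ?_
  rw [← Finset.sum_mul]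
  have hsum := congrArg (Int.cast : ℤ → ℚ)
    (Finset.sum_powerset_neg_one_pow_card (x := doublePositions k l))
  push_cast at hsum
  rw [hsum]
  simp only [doublePositions_eq_empty_iff hk hl, ite_mul, one_mul, zero_mul]

theorem addRow_mem_MTset {n : ℕ} {k : Fin (n + 1) → ℤ} (hk : StrictMono k) {l : Fin n → ℤ}
    (hl : l ∈ rowsAbove k ∅) {a : ℕ → ℕ → ℤ} (ha : a ∈ MTset n l) :
    addRow k a ∈ MTset (n + 1) k := by
  obtain ⟨⟨htri, h1, h2⟩, hbot⟩ := ha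
  rw [mem_rowsAbove_empty hk, ← htri.row_eq_padRow hbot] at hl
  refine ⟨⟨isTri_addRow k htri, fun i j hj hji hi => ?_, fun i j hj hji hi => ?_⟩,
    bottomRow_addRow k a⟩
  · rcases Nat.lt_or_ge n i with hin | hin
    · obtain rfl : i = n + 1 := by omega
      rw [addRow_last, addRow_last]
      exact strictMono_iff_padRow.1 hk j hj hji
    · rw [addRow_of_le _ _ hin, addRow_of_le _ _ hin]
      exact h1 i j hj hji hin
  · rcases Nat.lt_or_ge i n with hin | hin
    · rw [addRow_of_le _ _ (by omega), addRow_of_le _ _ (by omega), addRow_of_le _ _ (by omega)]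
      exact h2 i j hj hji hin
    · obtain rfl : i = n := by omega
      rw [addRow_last, addRow_last, addRow_of_le _ _ le_rfl]
      exact hl j hj hji

theorem dropRow_mem_MTset {n : ℕ} {a : ℕ → ℕ → ℤ} (ha : IsMT (n + 1) a) :
    dropRow n a ∈ MTset n fun j => a n (j + 1) := by
  obtain ⟨htri, h1, h2⟩ := ha
  refine ⟨⟨isTri_dropRow htri, fun i j hj hji hi => ?_, fun i j hj hji hi => ?_⟩,
    bottomRow_dropRow n a⟩
  · rw [dropRow_of_le _ hi, dropRow_of_le _ hi]
    exact h1 i j hj hji (by omega)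
  · rw [dropRow_of_le _ (by omega), dropRow_of_le _ (by omega), dropRow_of_le _ (by omega)]
    exact h2 i j hj hji (by omega)

theorem row_mem_rowsAbove_of_mem_MTset {n : ℕ} {k : Fin (n + 1) → ℤ} (hk : StrictMono k)
    {a : ℕ → ℕ → ℤ} (ha : a ∈ MTset (n + 1) k) :
    (fun j : Fin n => a n (j + 1)) ∈ (rowsAbove k ∅).filter StrictMono := by
  obtain ⟨⟨htri, h1, h2⟩, hbot⟩ := ha
  have hrow : ∀ j, 1 ≤ j → j ≤ n → padRow (fun j : Fin n => a n (j + 1)) j = a n j := by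
    intro j hj hjn
    rw [padRow, dif_pos ⟨hj, hjn⟩]
    simp only [Nat.sub_add_cancel hj]
  rw [Finset.mem_filter, mem_rowsAbove_empty hk, strictMono_iff_padRow,
    ← htri.row_eq_padRow hbot]
  refine ⟨fun j hj hjn => ?_, fun j hj hjn => ?_⟩
  · rw [hrow j hj hjn]
    exact h2 n j hj hjn le_rfl
  · rw [hrow j hj (by omega), hrow (j + 1) (by omega) hjn]
    exact h1 n j hj hjn (by omega)

open Classical in
theorem exists_finset_MTset (n : ℕ) (k : Fin n → ℤ) (hk : StrictMono k) :
    ∃ F : Finset (ℕ → ℕ → ℤ), (∀ a, a ∈ F ↔ a ∈ MTset n k) ∧ (F.card : ℚ) = signedCount n k := by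
  induction n with
  | zero =>
    refine ⟨{fun _ _ => 0}, fun a => ?_, by simp [signedCount]⟩
    rw [Finset.mem_singleton]
    constructor
    · rintro rfl
      exact ⟨⟨fun _ _ _ => rfl, by omega, by omega⟩, fun j => j.elim0⟩
    · rintro ⟨⟨htri, -⟩, -⟩
      exact funext fun i => funext fun j => htri i j (by omega)
  | succ n ih =>
    choose! F hF hcard using ih
    let index : Finset (Σ _ : Fin n → ℤ, ℕ → ℕ → ℤ) :=
      ((rowsAbove k ∅).filter StrictMono).sigma F
    have hmem : ∀ l a, (⟨l, a⟩ : Σ _ : Fin n → ℤ, ℕ → ℕ → ℤ) ∈ index ↔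
        l ∈ (rowsAbove k ∅).filter StrictMono ∧ a ∈ MTset n l := by
      intro l a
      rw [Finset.mem_sigma]
      exact and_congr_right fun hl => hF l (Finset.mem_filter.1 hl).2 a
    refine ⟨index.image fun x => addRow k x.2, fun a => ?_, ?_⟩
    · rw [Finset.mem_image]
      constructor
      · rintro ⟨⟨l, a'⟩, hx, rfl⟩
        obtain ⟨hl, ha⟩ := (hmem _ _).1 hx
        exact addRow_mem_MTset hk (Finset.mem_filter.1 hl).1 ha
      · intro ha
        exact ⟨⟨fun j => a n (j + 1), dropRow n a⟩,
          (hmem _ _).2 ⟨row_mem_rowsAbove_of_mem_MTset hk ha, dropRow_mem_MTset ha.1⟩,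
          addRow_dropRow ha.1.1 ha.2⟩
    · rw [Finset.card_image_of_injOn, Finset.card_sigma, signedCount_succ_of_strictMono hk]
      · push_cast
        exact Finset.sum_congr rfl fun l hl => hcard l (Finset.mem_filter.1 hl).2
      · rintro ⟨l, a⟩ hx ⟨l', a'⟩ hx' hg
        obtain ⟨-, ha⟩ := (hmem _ _).1 hx
        obtain ⟨-, ha'⟩ := (hmem _ _).1 hx'
        dsimp only at hg
        have haa : a = a' := by
          rw [← dropRow_addRow k ha.1.1, ← dropRow_addRow k ha'.1.1, hg]
        subst haa
        have hll : l = l' := funext fun j => by rw [← ha.2 j, ← ha'.2 j]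
        subst hll
        rfl

theorem ncard_MTset_eq_signedCount {n : ℕ} {k : Fin n → ℤ} (hk : StrictMono k) :
    ((MTset n k).ncard : ℚ) = signedCount n k := by
  obtain ⟨F, hF, hcard⟩ := exists_finset_MTset n k hk
  rw [← hcard, ← Set.ncard_coe_finset]
  congr 2
  ext a
  rw [Finset.mem_coe, hF]

/-- For every `n ≥ 1` and every `k ∈ ℤⁿ`,
`α(n;k) = Σ_{A ∈ 𝒯ₙ(k)} (-1)^{s(A)}`. -/
theorem alpha_eq_signed_sum_TSet (n : ℕ) (hn : 1 ≤ n)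
    (α : (Fin n → ℤ) → ℚ) (hα : IsAlpha n α) (k : Fin n → ℤ) :
    α k = ∑ᶠ A ∈ TSet n k, ((-1 : ℚ)) ^ (sT n A.1 A.2) := by
  rw [finsum_TSet_eq_signedCount]
  obtain ⟨⟨P, -, hP⟩, hMT⟩ := hα
  have hpoly : IsPolyFun fun k => α k - signedCount n k :=
    IsPolyFun.sub ⟨P, hP⟩ (isPolyFun_signedCount n)
  refine sub_eq_zero.1 (hpoly.eq_zero_of_strictMono (fun k hk => ?_) k)
  rw [hMT k hk, ncard_MTset_eq_signedCount hk, sub_self]
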